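/- Suppose u ∈ 𝒰(x) is a feasible suboptimal control sequence whose suboptimality is bounded by β > 0, i.e., J(x, u) ≤ J*(x) + β. Then J*(f(x, u_0)) − J*(x) ≤ β − xᵀ Q x. In particular, for any state x with xᵀ Q x > β, the optimal value strictly decreases along the closed loop: J*(f(x, u_0)) < J*(x). -/

import Mathlib

/-!
Dropping the first input `u_0` of a feasible sequence leaves a feasible sequence at `f(x, u_0)` for
the horizon `N - 1`, and costs `ℓ(x, u_0)` less. Appending the terminal control `κ(x̄_N)` restores
the horizon `N`: feasibility survives because `X_f ⊆ X` is invariant under `κ`, and the cost does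
not increase because the decrease of the terminal cost along `κ` pays for the new stage. Hence
`J*(f(x, u_0)) ≤ J(x, u) - ℓ(x, u_0) ≤ J*(x) + β - ℓ(x, u_0)`.
-/

open Matrix

/-- Predicted trajectory of the discrete-time system `x⁺ = f(x,u)`:
`x̄_0 = x`, `x̄_{i+1} = f(x̄_i, u_i)`. -/
def mpcTraj {n m : ℕ} (f : (Fin n → ℝ) → (Fin m → ℝ) → (Fin n → ℝ))
    (x : Fin n → ℝ) (u : ℕ → Fin m → ℝ) : ℕ → Fin n → ℝ
  | 0 => x
  | i + 1 => f (mpcTraj f x u i) (u i)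

/-- MPC cost `J(x,u) = Σ_{i=0}^{N−1} (x̄_iᵀ Q x̄_i + u_iᵀ R u_i) + x̄_Nᵀ P x̄_N`. -/
noncomputable def mpcCost {n m : ℕ} (N : ℕ)
    (f : (Fin n → ℝ) → (Fin m → ℝ) → (Fin n → ℝ))
    (Q P : Matrix (Fin n) (Fin n) ℝ) (R : Matrix (Fin m) (Fin m) ℝ)
    (x : Fin n → ℝ) (u : ℕ → Fin m → ℝ) : ℝ :=
  ∑ i ∈ Finset.range N,
      (mpcTraj f x u i ⬝ᵥ Q *ᵥ mpcTraj f x u i + u i ⬝ᵥ R *ᵥ u i)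
    + mpcTraj f x u N ⬝ᵥ P *ᵥ mpcTraj f x u N

/-- Feasible set `𝒰(x)`: sequences whose predicted states satisfy the state
constraints `g(x̄_i) ≤ 0`, whose inputs satisfy `u_min ≤ u_i ≤ u_max` for
`i = 0,…,N−1`, and whose terminal state lies in `X_f = {x : xᵀ P x ≤ α}`. -/
def mpcFeasible {n m p : ℕ} (N : ℕ)
    (f : (Fin n → ℝ) → (Fin m → ℝ) → (Fin n → ℝ))
    (P : Matrix (Fin n) (Fin n) ℝ)
    (g : (Fin n → ℝ) → (Fin p → ℝ)) (umin umax : Fin m → ℝ) (α : ℝ)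
    (x : Fin n → ℝ) : Set (ℕ → Fin m → ℝ) :=
  {u | (∀ i < N, g (mpcTraj f x u i) ≤ 0) ∧
       (∀ i < N, umin ≤ u i ∧ u i ≤ umax) ∧
       mpcTraj f x u N ⬝ᵥ P *ᵥ mpcTraj f x u N ≤ α}

/-- Optimal value function `J*(x) = inf { J(x,u) : u ∈ 𝒰(x) }`. -/
noncomputable def mpcValue {n m p : ℕ} (N : ℕ)
    (f : (Fin n → ℝ) → (Fin m → ℝ) → (Fin n → ℝ))
    (Q P : Matrix (Fin n) (Fin n) ℝ) (R : Matrix (Fin m) (Fin m) ℝ)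
    (g : (Fin n → ℝ) → (Fin p → ℝ)) (umin umax : Fin m → ℝ) (α : ℝ)
    (x : Fin n → ℝ) : ℝ :=
  sInf (mpcCost N f Q P R x '' mpcFeasible N f P g umin umax α x)

/-- A finite-horizon optimal control problem for `x⁺ = f(x, u)`, with stage cost `ℓ`, terminal cost
`V`, and state, input and terminal constraint sets. The horizon is left out, since it is an argument
of the notions below. -/
structure MPCProblem (X U : Type*) where
  dynamics : X → U → X
  stageCost : X → U → ℝ
  terminalCost : X → ℝ
  stateSet : Set X
  inputSet : Set U
  terminalSet : Set X

namespace MPCProblem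

variable {X U : Type*} (M : MPCProblem X U)

/-- The predicted trajectory from `x` under the inputs `u`. -/
def traj (x : X) (u : ℕ → U) : ℕ → X
  | 0 => x
  | i + 1 => M.dynamics (traj x u i) (u i)

/-- The cost `J(x, u) = Σ_{i < N} ℓ(x̄_i, u_i) + V(x̄_N)` for the horizon `N`. -/
def cost (N : ℕ) (x : X) (u : ℕ → U) : ℝ :=
  ∑ i ∈ Finset.range N, M.stageCost (M.traj x u i) (u i) + M.terminalCost (M.traj x u N)

/-- The feasible set `𝒰(x)` for the horizon `N`. The inputs `u_i` with `i ≥ N` are unconstrained. -/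
def feasible (N : ℕ) (x : X) : Set (ℕ → U) :=
  {u | (∀ i < N, M.traj x u i ∈ M.stateSet) ∧ (∀ i < N, u i ∈ M.inputSet) ∧
    M.traj x u N ∈ M.terminalSet}

/-- The optimal value `J*(x)` for the horizon `N`. As a real infimum, it is meaningful only if
`𝒰(x)` is nonempty and the cost is bounded below on it. -/
noncomputable def value (N : ℕ) (x : X) : ℝ :=
  sInf (M.cost N x '' M.feasible N x)

/-- The conditions on a terminal control law `κ`: it is admissible and keeps the terminal set
invariant, and along it the terminal cost decreases by at least the stage cost. The inclusion of the
terminal set in the state constraint set, which does not involve `κ`, is recorded here too. -/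
structure IsTerminalController (κ : X → U) : Prop where
  terminalSet_subset : M.terminalSet ⊆ M.stateSet
  mapsTo_inputSet : Set.MapsTo κ M.terminalSet M.inputSet
  mapsTo_terminalSet : Set.MapsTo (fun z ↦ M.dynamics z (κ z)) M.terminalSet M.terminalSet
  decrease : ∀ z ∈ M.terminalSet,
    M.stageCost z (κ z) + M.terminalCost (M.dynamics z (κ z)) ≤ M.terminalCost z

theorem traj_succ_eq_traj_tail (x : X) (u : ℕ → U) (i : ℕ) :
    M.traj x u (i + 1) = M.traj (M.dynamics x (u 0)) (fun j ↦ u (j + 1)) i := by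
  induction i with
  | zero => rfl
  | succ i ih => rw [traj, ih, traj]

theorem cost_succ_eq_stageCost_add_cost_tail (N : ℕ) (x : X) (u : ℕ → U) :
    M.cost (N + 1) x u =
      M.stageCost x (u 0) + M.cost N (M.dynamics x (u 0)) (fun j ↦ u (j + 1)) := by
  simp only [cost, Finset.sum_range_succ', traj_succ_eq_traj_tail]
  rw [traj]
  ring

theorem tail_mem_feasible {M : MPCProblem X U} {N : ℕ} {x : X} {u : ℕ → U}
    (hu : u ∈ M.feasible (N + 1) x) :
    (fun j ↦ u (j + 1)) ∈ M.feasible N (M.dynamics x (u 0)) := by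
  obtain ⟨hstate, hinput, hterminal⟩ := hu
  refine ⟨fun i hi ↦ ?_, fun i hi ↦ hinput (i + 1) (by lia), ?_⟩
  · rw [← traj_succ_eq_traj_tail]
    exact hstate (i + 1) (by lia)
  · rwa [← traj_succ_eq_traj_tail]

theorem traj_update_of_le (x : X) (u : ℕ → U) (w : U) {i N : ℕ} (hi : i ≤ N) :
    M.traj x (Function.update u N w) i = M.traj x u i := by
  induction i with
  | zero => rfl
  | succ i ih => rw [traj, traj, ih (by lia), Function.update_of_ne (by lia)]

theorem traj_update_succ (x : X) (u : ℕ → U) (w : U) (N : ℕ) :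
    M.traj x (Function.update u N w) (N + 1) = M.dynamics (M.traj x u N) w := by
  rw [traj, traj_update_of_le _ _ _ _ le_rfl, Function.update_self]

theorem cost_succ_update (N : ℕ) (x : X) (u : ℕ → U) (w : U) :
    M.cost (N + 1) x (Function.update u N w) =
      M.cost N x u + (M.stageCost (M.traj x u N) w +
        M.terminalCost (M.dynamics (M.traj x u N) w) - M.terminalCost (M.traj x u N)) := by
  have hstage : ∀ i ∈ Finset.range N,
      M.stageCost (M.traj x (Function.update u N w) i) (Function.update u N w i) =
        M.stageCost (M.traj x u i) (u i) := fun i hi ↦ by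
    have hiN := Finset.mem_range.mp hi
    rw [traj_update_of_le _ _ _ _ hiN.le, Function.update_of_ne hiN.ne]
  rw [cost, cost, Finset.sum_range_succ, Finset.sum_congr rfl hstage, traj_update_succ,
    traj_update_of_le _ _ _ _ le_rfl, Function.update_self]
  ring

namespace IsTerminalController

variable {M} {κ : X → U} {N : ℕ} {x : X} {u : ℕ → U}

theorem update_mem_feasible (hκ : M.IsTerminalController κ) (hu : u ∈ M.feasible N x) :
    Function.update u N (κ (M.traj x u N)) ∈ M.feasible (N + 1) x := by
  obtain ⟨hstate, hinput, hterminal⟩ := hu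
  refine ⟨fun i hi ↦ ?_, fun i hi ↦ ?_, ?_⟩
  · rw [traj_update_of_le _ _ _ _ (Nat.le_of_lt_succ hi)]
    rcases Nat.lt_succ_iff_lt_or_eq.mp hi with hlt | rfl
    · exact hstate i hlt
    · exact hκ.terminalSet_subset hterminal
  · rcases Nat.lt_succ_iff_lt_or_eq.mp hi with hlt | rfl
    · simpa only [Function.update_of_ne hlt.ne] using hinput i hlt
    · simpa only [Function.update_self] using hκ.mapsTo_inputSet hterminal
  · rw [traj_update_succ]
    exact hκ.mapsTo_terminalSet hterminal

theorem cost_succ_update_le (hκ : M.IsTerminalController κ) (hu : u ∈ M.feasible N x) :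
    M.cost (N + 1) x (Function.update u N (κ (M.traj x u N))) ≤ M.cost N x u := by
  rw [cost_succ_update]
  linarith [hκ.decrease _ hu.2.2]

theorem value_succ_le_cost (hκ : M.IsTerminalController κ)
    (hbdd : BddBelow (M.cost (N + 1) x '' M.feasible (N + 1) x)) (hu : u ∈ M.feasible N x) :
    M.value (N + 1) x ≤ M.cost N x u :=
  (csInf_le hbdd ⟨_, hκ.update_mem_feasible hu, rfl⟩).trans (hκ.cost_succ_update_le hu)

end IsTerminalController

theorem bddBelow_cost_image (hstage : ∀ z w, 0 ≤ M.stageCost z w)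
    (hterminal : ∀ z, 0 ≤ M.terminalCost z) (N : ℕ) (x : X) (S : Set (ℕ → U)) :
    BddBelow (M.cost N x '' S) :=
  ⟨0, Set.forall_mem_image.mpr fun _ _ ↦
    add_nonneg (Finset.sum_nonneg fun _ _ ↦ hstage _ _) (hterminal _)⟩

end MPCProblem

theorem mpc_suboptimal_value_decrease_general {X U : Type*} (M : MPCProblem X U) {κ : X → U}
    (hκ : M.IsTerminalController κ) {N : ℕ} {β : ℝ} {x : X} {u : ℕ → U}
    (hbdd : ∀ y, BddBelow (M.cost (N + 1) y '' M.feasible (N + 1) y))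
    (hu : u ∈ M.feasible (N + 1) x) (hsub : M.cost (N + 1) x u ≤ M.value (N + 1) x + β) :
    M.value (N + 1) (M.dynamics x (u 0)) - M.value (N + 1) x ≤ β - M.stageCost x (u 0) := by
  have hvalue := hκ.value_succ_le_cost (hbdd _) (MPCProblem.tail_mem_feasible hu)
  have hcost := M.cost_succ_eq_stageCost_add_cost_tail N x u
  linarith

section Quadratic

variable {n m p : ℕ} (f : (Fin n → ℝ) → (Fin m → ℝ) → (Fin n → ℝ))
  (Q P : Matrix (Fin n) (Fin n) ℝ) (R : Matrix (Fin m) (Fin m) ℝ)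
  (g : (Fin n → ℝ) → (Fin p → ℝ)) (umin umax : Fin m → ℝ) (α : ℝ)

/-- The problem with quadratic costs, state constraint `g ≤ 0`, box input constraint and terminal
set `{z | zᵀ P z ≤ α}`, whose optimal value is `mpcValue`. -/
def quadraticMPCProblem : MPCProblem (Fin n → ℝ) (Fin m → ℝ) where
  dynamics := f
  stageCost z w := z ⬝ᵥ Q *ᵥ z + w ⬝ᵥ R *ᵥ w
  terminalCost z := z ⬝ᵥ P *ᵥ z
  stateSet := {z | g z ≤ 0}
  inputSet := Set.Icc umin umax
  terminalSet := {z | z ⬝ᵥ P *ᵥ z ≤ α}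

theorem mpcTraj_eq_traj :
    mpcTraj f = (quadraticMPCProblem f Q P R g umin umax α).traj := by
  ext x u i : 3
  induction i with
  | zero => rfl
  | succ i ih => rw [mpcTraj, MPCProblem.traj, ih]; rfl

theorem mpcCost_eq_cost (N : ℕ) :
    mpcCost N f Q P R = (quadraticMPCProblem f Q P R g umin umax α).cost N := by
  ext x u
  rw [mpcCost, mpcTraj_eq_traj f Q P R g umin umax α]
  rfl

theorem mpcFeasible_eq_feasible (N : ℕ) :
    mpcFeasible N f P g umin umax α = (quadraticMPCProblem f Q P R g umin umax α).feasible N := by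
  ext x : 1
  rw [mpcFeasible, mpcTraj_eq_traj f Q P R g umin umax α]
  rfl

theorem mpcValue_eq_value (N : ℕ) :
    mpcValue N f Q P R g umin umax α = (quadraticMPCProblem f Q P R g umin umax α).value N := by
  ext x
  rw [mpcValue, mpcCost_eq_cost f Q P R g umin umax α, mpcFeasible_eq_feasible f Q P R,
    MPCProblem.value]

variable {f Q P R g umin umax α}

theorem isTerminalController_quadraticMPCProblem
    (hstage : ∀ z w, 0 ≤ z ⬝ᵥ Q *ᵥ z + w ⬝ᵥ R *ᵥ w)
    (hXfX : ∀ z : Fin n → ℝ, z ⬝ᵥ P *ᵥ z ≤ α → g z ≤ 0) {κ : (Fin n → ℝ) → (Fin m → ℝ)}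
    (hκ : ∀ z : Fin n → ℝ, z ⬝ᵥ P *ᵥ z ≤ α →
      f z (κ z) ⬝ᵥ P *ᵥ f z (κ z) - z ⬝ᵥ P *ᵥ z ≤ -(z ⬝ᵥ Q *ᵥ z + κ z ⬝ᵥ R *ᵥ κ z))
    (hκU : ∀ z : Fin n → ℝ, z ⬝ᵥ P *ᵥ z ≤ α → umin ≤ κ z ∧ κ z ≤ umax) :
    (quadraticMPCProblem f Q P R g umin umax α).IsTerminalController κ where
  terminalSet_subset := hXfX
  mapsTo_inputSet := hκU
  mapsTo_terminalSet z (hz : z ⬝ᵥ P *ᵥ z ≤ α) := by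
    change f z (κ z) ⬝ᵥ P *ᵥ f z (κ z) ≤ α
    linarith [hκ z hz, hstage z (κ z)]
  decrease z hz := by
    simp only [quadraticMPCProblem]
    linarith [hκ z hz]

end Quadratic

/-- **Strict Lyapunov decrease under suboptimal control** (inequalities (44)–(45) in the
proof of Theorem 2): if `u ∈ 𝒰(x)` is feasible with suboptimality bound
`J(x,u) ≤ J*(x) + β`, `β > 0`, then `J*(f(x,u_0)) − J*(x) ≤ β − xᵀ Q x`; in particular,
if `xᵀ Q x > β` then `J*(f(x,u_0)) < J*(x)`. -/
theorem mpc_suboptimal_value_decrease {n m p N : ℕ} (hN : 1 ≤ N)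
    (f : (Fin n → ℝ) → (Fin m → ℝ) → (Fin n → ℝ))
    (Q P : Matrix (Fin n) (Fin n) ℝ) (R : Matrix (Fin m) (Fin m) ℝ)
    (hQ : Q.PosSemidef) (hR : R.PosSemidef) (hP : P.PosSemidef)
    (g : (Fin n → ℝ) → (Fin p → ℝ)) (umin umax : Fin m → ℝ)
    (α : ℝ) (hα : 0 ≤ α)
    (hXfX : ∀ z : Fin n → ℝ, z ⬝ᵥ P *ᵥ z ≤ α → g z ≤ 0)
    (κ : (Fin n → ℝ) → (Fin m → ℝ))
    (hκ : ∀ z : Fin n → ℝ, z ⬝ᵥ P *ᵥ z ≤ α →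
      f z (κ z) ⬝ᵥ P *ᵥ f z (κ z) - z ⬝ᵥ P *ᵥ z
        ≤ -(z ⬝ᵥ Q *ᵥ z + κ z ⬝ᵥ R *ᵥ κ z))
    (hκU : ∀ z : Fin n → ℝ, z ⬝ᵥ P *ᵥ z ≤ α → umin ≤ κ z ∧ κ z ≤ umax)
    (β : ℝ) (hβ : 0 < β)
    (x : Fin n → ℝ) (u : ℕ → Fin m → ℝ)
    (hu : u ∈ mpcFeasible N f P g umin umax α x)
    (hsub : mpcCost N f Q P R x u ≤ mpcValue N f Q P R g umin umax α x + β) :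
    mpcValue N f Q P R g umin umax α (f x (u 0))
        - mpcValue N f Q P R g umin umax α x
      ≤ β - x ⬝ᵥ Q *ᵥ x ∧
    (β < x ⬝ᵥ Q *ᵥ x →
      mpcValue N f Q P R g umin umax α (f x (u 0))
        < mpcValue N f Q P R g umin umax α x) := by
  obtain ⟨k, rfl⟩ := Nat.exists_eq_add_of_le' hN
  have hQ_nonneg (z) : 0 ≤ z ⬝ᵥ Q *ᵥ z := hQ.dotProduct_mulVec_nonneg z
  have hR_nonneg (w) : 0 ≤ w ⬝ᵥ R *ᵥ w := hR.dotProduct_mulVec_nonneg w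
  have hP_nonneg (z) : 0 ≤ z ⬝ᵥ P *ᵥ z := hP.dotProduct_mulVec_nonneg z
  have hstage (z w) : 0 ≤ z ⬝ᵥ Q *ᵥ z + w ⬝ᵥ R *ᵥ w := add_nonneg (hQ_nonneg z) (hR_nonneg w)
  rw [mpcFeasible_eq_feasible f Q P R] at hu
  rw [mpcCost_eq_cost f Q P R g umin umax α, mpcValue_eq_value] at hsub
  rw [mpcValue_eq_value]
  let M := quadraticMPCProblem f Q P R g umin umax α
  have hdecrease : M.value (k + 1) (f x (u 0)) - M.value (k + 1) x
      ≤ β - (x ⬝ᵥ Q *ᵥ x + u 0 ⬝ᵥ R *ᵥ u 0) :=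
    mpc_suboptimal_value_decrease_general M
      (isTerminalController_quadraticMPCProblem hstage hXfX hκ hκU)
      (fun _ ↦ M.bddBelow_cost_image hstage hP_nonneg _ _ _) hu hsub
  exact ⟨by linarith [hR_nonneg (u 0)], fun h ↦ by linarith [hR_nonneg (u 0)]⟩
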